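/- First fundamental theorem of FC for the 1st level general fractional derivative: let (κ, k₁, k₂) ∈ L₁¹ and let f ∈ C_{-1,(k₁)}(0,∞), i.e. f = k₁ * φ for some φ ∈ C_{-1}(0,∞). Then, with g = κ * f, the function k₂ * g is differentiable on (0,∞), its derivative belongs to C_{-1}(0,∞), and (k₁ * d/dt (k₂ * g))(t) = f(t) for all t > 0; that is, ( 1L D_{(k₁,k₂)} I_{(κ)} f)(t) = f(t), so the 1st level GFD is a left inverse operator to I_{(κ)} on C_{-1,(k₁)}(0,∞). -/

import Mathlib

open Real Filter MeasureTheory intervalIntegral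

/-- The Laplace convolution `(f * g)(t) = ∫_0^t f(t-τ) g(τ) dτ`. -/
noncomputable def lconv (f g : ℝ → ℝ) : ℝ → ℝ :=
  fun t => ∫ τ in (0:ℝ)..t, f (t - τ) * g τ

/-- The space `C_{-1}(0,∞)`: functions representable as `t^p f₁(t)` with `p > -1`
and `f₁` continuous on `[0,∞)`. -/
def CMinusOne (f : ℝ → ℝ) : Prop :=
  ∃ p : ℝ, p > -1 ∧ ∃ f₁ : ℝ → ℝ, ContinuousOn f₁ (Set.Ici 0) ∧
    ∀ t > (0:ℝ), f t = t ^ p * f₁ t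


/-- The class `L₁¹` of triples of 1st level kernels: `κ, k₁, k₂ ∈ C_{-1}(0,∞)` with
`(κ * k₁ * k₂)(t) = 1` for all `t > 0`. -/
def FirstLevelKernels (κ k₁ k₂ : ℝ → ℝ) : Prop :=
  CMinusOne κ ∧ CMinusOne k₁ ∧ CMinusOne k₂ ∧ ∀ t > (0:ℝ), lconv κ (lconv k₁ k₂) t = 1


open scoped Convolution Topology

lemma lconv_comm (f g : ℝ → ℝ) (t : ℝ) : lconv f g t = lconv g f t := by
  unfold lconv
  have h := intervalIntegral.integral_comp_sub_left (a := 0) (b := t)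
    (fun τ => f τ * g (t - τ)) t
  simp only [sub_sub_cancel, sub_self, sub_zero] at h
  rw [h]
  simp only [mul_comm]

lemma lconv_congr {f f' g g' : ℝ → ℝ} (hf : ∀ t > 0, f t = f' t) (hg : ∀ t > 0, g t = g' t)
    {t : ℝ} (ht : 0 < t) : lconv f g t = lconv f' g' t := by
  unfold lconv
  rw [intervalIntegral.integral_of_le ht.le, intervalIntegral.integral_of_le ht.le,
    integral_Ioc_eq_integral_Ioo, integral_Ioc_eq_integral_Ioo]
  apply setIntegral_congr_fun measurableSet_Ioo
  intro s hs
  simp only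
  rw [hf _ (sub_pos.2 hs.2), hg _ hs.1]

lemma CMinusOne.exists_cont {f : ℝ → ℝ} (hf : CMinusOne f) :
    ∃ p : ℝ, -1 < p ∧ ∃ f₁ : ℝ → ℝ, Continuous f₁ ∧ ∀ t > (0:ℝ), f t = t ^ p * f₁ t := by
  obtain ⟨p, hp, f₁, hf₁, h⟩ := hf
  refine ⟨p, hp, fun t => f₁ (max t 0), ?_, ?_⟩
  · exact hf₁.comp_continuous (by fun_prop) (fun x => Set.mem_Ici.2 (le_max_right x 0))
  · intro t ht
    simp only [max_eq_left ht.le, h t ht]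

lemma CMinusOne.continuousOn {f : ℝ → ℝ} (hf : CMinusOne f) :
    ContinuousOn f (Set.Ioi 0) := by
  obtain ⟨p, hp, f₁, hf₁, h⟩ := hf.exists_cont
  have : ContinuousOn (fun t : ℝ => t ^ p * f₁ t) (Set.Ioi 0) :=
    (continuousOn_id.rpow_const (fun x hx => Or.inl (ne_of_gt hx))).mul hf₁.continuousOn
  exact this.congr (fun x hx => h x hx)

lemma CMinusOne.congr {f g : ℝ → ℝ} (hf : CMinusOne f) (h : ∀ t > 0, g t = f t) :
    CMinusOne g := by
  obtain ⟨p, hp, f₁, hf₁, h'⟩ := hf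
  exact ⟨p, hp, f₁, hf₁, fun t ht => (h t ht).trans (h' t ht)⟩

lemma CMinusOne.norm {f : ℝ → ℝ} (hf : CMinusOne f) : CMinusOne (fun t => ‖f t‖) := by
  obtain ⟨p, hp, f₁, hf₁, h'⟩ := hf
  refine ⟨p, hp, fun t => ‖f₁ t‖, hf₁.norm, fun t ht => ?_⟩
  simp only [h' t ht, norm_mul, Real.norm_of_nonneg (Real.rpow_nonneg ht.le p)]

lemma beta_intervalIntegrable {p q : ℝ} (hp : -1 < p) (hq : -1 < q) {t : ℝ} (ht : 0 < t) :
    IntervalIntegrable (fun s : ℝ => (t - s) ^ p * s ^ q) volume 0 t := by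
  have h1 : IntervalIntegrable (fun s : ℝ => (t - s) ^ p * s ^ q) volume 0 (t / 2) := by
    refine (intervalIntegrable_rpow' hq).continuousOn_mul ?_
    refine ContinuousOn.rpow_const (by fun_prop) (fun x hx => Or.inl ?_)
    rw [Set.uIcc_of_le (by linarith)] at hx
    have := hx.2
    apply ne_of_gt
    linarith
  have h2 : IntervalIntegrable (fun s : ℝ => (t - s) ^ p * s ^ q) volume (t / 2) t := by
    have h3 : IntervalIntegrable (fun s : ℝ => (t - s) ^ p) volume (t / 2) t := by
      have := (intervalIntegrable_rpow' (a := t / 2) (b := 0) hp).comp_sub_left t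
      rw [sub_zero, sub_half] at this
      exact this
    refine h3.mul_continuousOn ?_
    refine ContinuousOn.rpow_const (by fun_prop) (fun x hx => Or.inl ?_)
    rw [Set.uIcc_of_le (by linarith)] at hx
    have := hx.1
    apply ne_of_gt
    linarith
  exact h1.trans h2

lemma lconv_integrable {f g : ℝ → ℝ} (hf : CMinusOne f) (hg : CMinusOne g) {t : ℝ} (ht : 0 < t) :
    IntegrableOn (fun s => f (t - s) * g s) (Set.Ioo 0 t) := by
  obtain ⟨p, hp, f₁, hf₁, hf⟩ := hf.exists_cont
  obtain ⟨q, hq, g₁, hg₁, hg⟩ := hg.exists_cont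
  have h := (beta_intervalIntegrable hp hq ht).mul_continuousOn
    (g := fun s => f₁ (t - s) * g₁ s) (by fun_prop)
  rw [intervalIntegrable_iff_integrableOn_Ioo_of_le ht.le] at h
  refine h.congr_fun (fun s hs => ?_) measurableSet_Ioo
  simp only
  rw [hf _ (sub_pos.2 hs.2), hg _ hs.1]
  ring

lemma CMinusOne.lconv {f g : ℝ → ℝ} (hf : CMinusOne f) (hg : CMinusOne g) :
    CMinusOne (lconv f g) := by
  obtain ⟨p, hp, f₁, hf₁, hf⟩ := hf.exists_cont
  obtain ⟨q, hq, g₁, hg₁, hg⟩ := hg.exists_cont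
  refine ⟨p + q + 1, by linarith,
    fun t => ∫ u in (0:ℝ)..1, ((1 - u) ^ p * u ^ q) * (f₁ (t * (1 - u)) * g₁ (t * u)), ?_, ?_⟩
  · apply Continuous.continuousOn
    rw [continuous_iff_continuousAt]
    intro t₀
    have hb := beta_intervalIntegrable hp hq one_pos
    obtain ⟨C, hC⟩ := (isCompact_Icc (a := -(|t₀| + 1)) (b := |t₀| + 1)).exists_bound_of_continuousOn
      hf₁.continuousOn
    obtain ⟨D, hD⟩ := (isCompact_Icc (a := -(|t₀| + 1)) (b := |t₀| + 1)).exists_bound_of_continuousOn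
      hg₁.continuousOn
    refine intervalIntegral.continuousAt_of_dominated_interval
      (bound := fun u => ((1 - u) ^ p * u ^ q) * (C * D)) ?_ ?_ ?_ ?_
    · refine Eventually.of_forall fun t => ?_
      have := hb.mul_continuousOn (g := fun u => f₁ (t * (1 - u)) * g₁ (t * u)) (by fun_prop)
      exact this.def'.aestronglyMeasurable
    · have : ∀ᶠ t in 𝓝 t₀, |t| < |t₀| + 1 :=
        (continuous_abs.tendsto t₀).eventually (gt_mem_nhds (by linarith))
      filter_upwards [this] with t ht
      refine Eventually.of_forall fun u hu => ?_
      rw [Set.uIoc_of_le zero_le_one] at hu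
      have key : ∀ v : ℝ, 0 ≤ v → v ≤ 1 → t * v ∈ Set.Icc (-(|t₀| + 1)) (|t₀| + 1) := by
        intro v hv0 hv1
        rw [Set.mem_Icc, ← abs_le, abs_mul, abs_of_nonneg hv0]
        have := mul_le_of_le_one_right (abs_nonneg t) hv1
        linarith
      have h1 := hC _ (key (1 - u) (by linarith [hu.2]) (by linarith [hu.1]))
      have h2 := hD _ (key u hu.1.le hu.2)
      have h0 : 0 ≤ (1 - u) ^ p * u ^ q :=
        mul_nonneg (Real.rpow_nonneg (by linarith [hu.2]) _) (Real.rpow_nonneg hu.1.le _)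
      rw [norm_mul, Real.norm_of_nonneg h0, norm_mul]
      exact mul_le_mul_of_nonneg_left
        (mul_le_mul h1 h2 (norm_nonneg _) ((norm_nonneg _).trans h1)) h0
    · exact hb.mul_const _
    · refine Eventually.of_forall fun u _ => ?_
      apply Continuous.continuousAt
      fun_prop
  · intro t ht
    have h := intervalIntegral.smul_integral_comp_mul_left (a := 0) (b := 1)
      (fun s => f (t - s) * g s) t
    rw [mul_zero, mul_one] at h
    unfold _root_.lconv
    rw [← h, smul_eq_mul, ← intervalIntegral.integral_const_mul,
      ← intervalIntegral.integral_const_mul,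
      intervalIntegral.integral_of_le zero_le_one, intervalIntegral.integral_of_le zero_le_one,
      integral_Ioc_eq_integral_Ioo, integral_Ioc_eq_integral_Ioo]
    apply setIntegral_congr_fun measurableSet_Ioo
    intro u hu
    have hu1 : 0 < 1 - u := sub_pos.2 hu.2
    have e : t - t * u = t * (1 - u) := by ring
    simp only
    rw [e, hf _ (mul_pos ht hu1), hg _ (mul_pos ht hu.1), Real.mul_rpow ht.le hu1.le,
      Real.mul_rpow ht.le hu.1.le, Real.rpow_add ht, Real.rpow_add ht, Real.rpow_one]
    ring

/-- Extension by zero. -/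
noncomputable def extZ (f : ℝ → ℝ) : ℝ → ℝ := Set.indicator (Set.Ioi 0) f

lemma extZ_lconv (f g : ℝ → ℝ) :
    extZ (lconv f g) = (extZ f) ⋆[ContinuousLinearMap.mul ℝ ℝ] (extZ g) := by
  unfold extZ
  rw [← posConvolution_eq_convolution_indicator f g (ContinuousLinearMap.mul ℝ ℝ) volume, posConvolution]
  congr 1
  funext x
  rw [lconv_comm]
  unfold lconv
  congr 1
  funext s
  simp [mul_comm]

lemma extZ_norm (f : ℝ → ℝ) : (fun x => ‖extZ f x‖) = extZ (fun x => ‖f x‖) := by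
  funext x
  exact norm_indicator_eq_indicator_norm _ _

lemma extZ_aesm {f : ℝ → ℝ} (hf : CMinusOne f) : AEStronglyMeasurable (extZ f) volume := by
  unfold extZ
  rw [aestronglyMeasurable_indicator_iff measurableSet_Ioi]
  exact hf.continuousOn.aestronglyMeasurable measurableSet_Ioi

lemma extZ_exists {f g : ℝ → ℝ} (hf : CMinusOne f) (hg : CMinusOne g) (x : ℝ) :
    ConvolutionExistsAt (extZ f) (extZ g) x (ContinuousLinearMap.mul ℝ ℝ) volume := by
  unfold ConvolutionExistsAt
  have e : (fun t => (ContinuousLinearMap.mul ℝ ℝ) (extZ f t) (extZ g (x - t)))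
      = Set.indicator (Set.Ioo 0 x) (fun s => g (x - s) * f s) := by
    funext s
    simp only [ContinuousLinearMap.mul_apply', extZ, Set.indicator, Set.mem_Ioi, Set.mem_Ioo,
      sub_pos]
    by_cases h1 : 0 < s <;> by_cases h2 : s < x <;> simp [h1, h2, mul_comm]
  rw [e, integrable_indicator_iff measurableSet_Ioo]
  rcases le_or_gt x 0 with hx | hx
  · rw [Set.Ioo_eq_empty (not_lt.2 hx)]
    exact integrableOn_empty
  · exact lconv_integrable hg hf hx

lemma lconv_assoc {f g h : ℝ → ℝ} (hf : CMinusOne f) (hg : CMinusOne g) (hh : CMinusOne h)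
    {t : ℝ} (ht : 0 < t) : lconv (lconv f g) h t = lconv f (lconv g h) t := by
  have key : extZ (lconv (lconv f g) h) t = extZ (lconv f (lconv g h)) t := by
    rw [extZ_lconv, extZ_lconv, extZ_lconv, extZ_lconv]
    refine convolution_assoc _ _ _ _ (fun x y z => by simp [mul_assoc]) (extZ_aesm hf)
      (extZ_aesm hg) (extZ_aesm hh) (Eventually.of_forall fun y => extZ_exists hf hg y)
      (Eventually.of_forall fun y => ?_) ?_
    · rw [extZ_norm, extZ_norm]
      exact extZ_exists hg.norm hh.norm y
    · rw [extZ_norm, extZ_norm, extZ_norm, ← extZ_lconv]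
      exact extZ_exists hf.norm (hg.norm.lconv hh.norm) t
  simpa [extZ, Set.indicator, ht] using key

/-- First fundamental theorem of FC for the 1st level GFD: for
`(κ, k₁, k₂) ∈ L₁¹` and `f ∈ C_{-1,(k₁)}(0,∞)` (i.e. `f = k₁ * φ` with
`φ ∈ C_{-1}(0,∞)`), with `g = κ * f` the function `k₂ * g` is differentiable on
`(0,∞)`, its derivative belongs to `C_{-1}(0,∞)`, and
`(k₁ * d/dt (k₂ * g))(t) = f(t)` for all `t > 0`; that is,
`( 1L D_{(k₁,k₂)} I_{(κ)} f)(t) = f(t)`. -/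
theorem first_fundamental_theorem_1L (κ k₁ k₂ f φ : ℝ → ℝ)
    (hker : FirstLevelKernels κ k₁ k₂) (hφ : CMinusOne φ)
    (hfφ : ∀ t > (0:ℝ), f t = lconv k₁ φ t) :
    (∀ t > (0:ℝ), DifferentiableAt ℝ (lconv k₂ (lconv κ f)) t) ∧
      CMinusOne (deriv (lconv k₂ (lconv κ f))) ∧
      ∀ t > (0:ℝ), lconv k₁ (deriv (lconv k₂ (lconv κ f))) t = f t := by
  obtain ⟨hκ, hk₁, hk₂, hone⟩ := hker
  have hcm := hφ
  have main : ∀ t > (0:ℝ), lconv k₂ (lconv κ f) t = ∫ s in (0:ℝ)..t, φ s := by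
    intro t ht
    calc lconv k₂ (lconv κ f) t = lconv k₂ (lconv (lconv κ k₁) φ) t := by
          refine lconv_congr (fun _ _ => rfl) (fun s hs => ?_) ht
          rw [lconv_assoc hκ hk₁ hφ hs]
          exact lconv_congr (fun _ _ => rfl) hfφ hs
      _ = lconv (lconv k₂ (lconv κ k₁)) φ t := (lconv_assoc hk₂ (hκ.lconv hk₁) hφ ht).symm
      _ = lconv (fun _ => 1) φ t := by
          refine lconv_congr (fun s hs => ?_) (fun _ _ => rfl) ht
          rw [lconv_comm, lconv_assoc hκ hk₁ hk₂ hs, hone s hs]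
      _ = ∫ s in (0:ℝ)..t, φ s := by simp [lconv]
  have hder : ∀ t > (0:ℝ), HasDerivAt (lconv k₂ (lconv κ f)) (φ t) t := by
    intro t ht
    have h1CM : CMinusOne (fun _ : ℝ => (1:ℝ)) :=
      ⟨0, by norm_num, fun _ => 1, continuousOn_const, fun t _ => by simp⟩
    have hint : IntervalIntegrable φ volume 0 t := by
      rw [intervalIntegrable_iff_integrableOn_Ioo_of_le ht.le]
      simpa using lconv_integrable h1CM hφ ht
    have hc : ContinuousAt φ t := hφ.continuousOn.continuousAt (Ioi_mem_nhds ht)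
    have hd := intervalIntegral.integral_hasDerivAt_right hint
      (hφ.continuousOn.stronglyMeasurableAtFilter isOpen_Ioi t ht) hc
    refine hd.congr_of_eventuallyEq ?_
    filter_upwards [Ioi_mem_nhds ht] with s hs using main s hs
  refine ⟨fun t ht => (hder t ht).differentiableAt, hφ.congr fun t ht => (hder t ht).deriv, ?_⟩
  intro t ht
  rw [hfφ t ht]
  exact lconv_congr (fun _ _ => rfl) (fun s hs => (hder s hs).deriv) ht
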